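/- For every n ∈ ℤ one has the operator identity (1/2) L^{1/2}_{2n} = L¹_n + (1/4) h_n on F. (Equivalently, in terms of fields, (1/2):h^D(w)²: = (1/4):(∂_{−w}φ^D(−w))φ^D(−w): + (1/4):(∂_w φ^D(w))φ^D(w): − (1/(2w)) h^D(w), i.e. the Virasoro field L̃¹(z²) built from half the modes of L^{1/2} equals the member L^{1/2,−1/4}(z²) of the two-parameter family.) -/

import Mathlib

noncomputable section

/-- The neutral fermion Fock space `F = F^{⊗1/2}`: the complex vector space with
basis `{e_S : S a finite subset of ℕ}`. -/
abbrev FockD : Type := Finset ℕ →₀ ℂ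

/-- Basis vector `e_S`. -/
def eD (S : Finset ℕ) : FockD := Finsupp.single S 1

/-- Action of the fermion mode `a_m` on the basis vector `e_S`. -/
def aVec (m : ℤ) (S : Finset ℕ) : FockD :=
  if 0 ≤ m then
    if m.toNat ∈ S then 0
    else ((-1 : ℂ) ^ (S.filter (fun s => m.toNat < s)).card) • eD (insert m.toNat S)
  else
    if (-m - 1).toNat ∈ S then
      ((-1 : ℂ) ^ (S.filter (fun s => (-m - 1).toNat < s)).card) • eD (S.erase ((-m - 1).toNat))
    else 0

/-- The fermion mode `a_m` as a linear operator on `F`. -/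
def aOp (m : ℤ) : FockD →ₗ[ℂ] FockD :=
  Finsupp.lsum ℂ fun S => LinearMap.toSpanSingleton ℂ FockD (aVec m S)

/-- Fermionic normal ordered product `:a_i a_j:`. -/
def NO (i j : ℤ) : FockD →ₗ[ℂ] FockD :=
  if 0 ≤ i then (aOp i).comp (aOp j) else -((aOp j).comp (aOp i))

/-- Heisenberg operator `h_n = (1/2) ∑_{i∈ℤ} (−1)^{i+1} :a_i a_{−2n−1−i}:`
(on each vector only finitely many summands are nonzero). -/
def hD (n : ℤ) (x : FockD) : FockD :=
  (1 / 2 : ℂ) • ∑ᶠ i : ℤ, ((-1 : ℂ) ^ (i + 1)) • NO i (-2 * n - 1 - i) x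

/-- Virasoro operator `L^{1/2}_m = (1/2) ∑_{i∈ℤ} i · :a_i a_{−m−i−1}:`. -/
def LhalfD (m : ℤ) (x : FockD) : FockD :=
  (1 / 2 : ℂ) • ∑ᶠ i : ℤ, (i : ℂ) • NO i (-m - i - 1) x

/-- 2-point Virasoro operator `L¹_n = (1/2) ∑_{j∈ℤ} :h_j h_{n−j}:`, where the bosonic
normal ordered product is `:h_j h_k: = h_j h_k` if `j ≤ k` and `h_k h_j` otherwise. -/
def L1D (n : ℤ) (x : FockD) : FockD :=
  (1 / 2 : ℂ) • ∑ᶠ j : ℤ, if j ≤ n - j then hD j (hD (n - j) x) else hD (n - j) (hD j x)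

/-- Charge `c(S) = #{s ∈ S : s odd} − #{s ∈ S : s even}`. -/
def chg (S : Finset ℕ) : ℤ :=
  ((S.filter fun s => Odd s).card : ℤ) - ((S.filter fun s => Even s).card : ℤ)

/-- Charge-`n` component `F_{(n)}`: the span of the `e_S` with `c(S) = n`. -/
def FockComp (n : ℤ) : Submodule ℂ FockD :=
  Submodule.span ℂ {x : FockD | ∃ S : Finset ℕ, chg S = n ∧ x = eD S}

/-- Index set of the vacuum-like vector `v_n`. -/
def vSet (n : ℤ) : Finset ℕ :=
  if 0 ≤ n then (Finset.range n.toNat).image fun i => 2 * i + 1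
  else (Finset.range (-n).toNat).image fun i => 2 * i

/-- Vacuum-like vector `v_n` (`v_0 = e_∅`, `v_n = e_{{1,3,…,2n−1}}`,
`v_{−n} = e_{{0,2,…,2n−2}}` for `n > 0`). -/
def vD (n : ℤ) : FockD := eD (vSet n)

/-! An operator on `F` that maps the vacuum space (the common kernel of the annihilation modes) into
the span of the ranges of the creation modes is determined by its commutators with the modes `a_m`,
because these two subspaces meet trivially. So it suffices to compare commutators with `a_m`, and
those of both sides are multiples of `a_{m-2n}`.

For `L^{1/2}` and `h` this is immediate. For `L¹`, the commutator of `:h_j h_k:` with `a_m` is a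
multiple of `:h_j a_{m-2k}: + :h_k a_{m-2j}:` plus a reordering multiple of `a_{m-2n}`. The normal
ordered terms add up to modes of the field `:hφ:`, which vanishes since `φ` anticommutes with
itself, and the reordering terms live on a finite interval of `j`, where they telescope.
-/

open Filter
open scoped symmDiff

attribute [local instance] LieRing.ofAssociativeRing

section PointwiseSums

variable {ι κ R M : Type*} [CommRing R] [AddCommGroup M] [Module R M]

/-- Each vector is eventually killed along `l` by the family `T`. For `l = cofinite` this is local
finiteness of the sum of `T`; for modes `T : ℤ → End M` and `l = atBot` or `l = atTop` it is the
field condition of vertex algebras. -/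
def VanishesAlong (T : ι → Module.End R M) (l : Filter ι) : Prop :=
  ∀ x, ∀ᶠ i in l, T i x = 0

/-- The family `T` is locally finite and sums to `A` on every vector. -/
structure HasPointwiseSum (T : ι → Module.End R M) (A : Module.End R M) : Prop where
  vanishesAlong : VanishesAlong T cofinite
  finsum_apply (x : M) : ∑ᶠ i, T i x = A x

variable {T U : ι → Module.End R M} {A B : Module.End R M} {l : Filter ι}

namespace VanishesAlong

theorem of_eventually_eq_mul (hT : VanishesAlong T l) (h : ∀ᶠ i in l, ∃ C, U i = C * T i) :
    VanishesAlong U l := fun x => by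
  filter_upwards [hT x, h] with i hi ⟨C, hC⟩
  rw [hC, Module.End.mul_apply, hi, map_zero]

theorem comp_tendsto {l' : Filter κ} {e : κ → ι} (hT : VanishesAlong T l) (he : Tendsto e l' l) :
    VanishesAlong (fun k => T (e k)) l' := fun x => he.eventually (hT x)

theorem cofinite_of_int {T : ℤ → Module.End R M} (hbot : VanishesAlong T atBot)
    (htop : VanishesAlong T atTop) : VanishesAlong T cofinite := fun x => by
  rw [Int.cofinite_eq, eventually_sup]
  exact ⟨hbot x, htop x⟩

theorem hasFiniteSupport (hT : VanishesAlong T cofinite) (x : M) :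
    (fun i => T i x).HasFiniteSupport :=
  eventually_cofinite.1 (hT x)

/-- The sum of a locally finite family of operators. -/
def pointwiseSum (hT : VanishesAlong T cofinite) : Module.End R M where
  toFun x := ∑ᶠ i, T i x
  map_add' x y := by
    simp only [map_add]
    exact finsum_add_distrib (hT.hasFiniteSupport x) (hT.hasFiniteSupport y)
  map_smul' c x := by
    simp only [map_smul, RingHom.id_apply]
    exact (smul_finsum' c (hT.hasFiniteSupport x)).symm

theorem hasPointwiseSum (hT : VanishesAlong T cofinite) : HasPointwiseSum T hT.pointwiseSum :=
  ⟨hT, fun _ => rfl⟩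

end VanishesAlong

namespace HasPointwiseSum

theorem unique (hA : HasPointwiseSum T A) (hB : HasPointwiseSum T B) : A = B :=
  LinearMap.ext fun x => (hA.finsum_apply x).symm.trans (hB.finsum_apply x)

theorem zero : HasPointwiseSum (fun _ : ι => (0 : Module.End R M)) 0 :=
  ⟨fun _ => .of_forall fun _ => rfl, fun _ => finsum_zero⟩

theorem ite_eq [DecidableEq ι] (k : ι) (T : ι → Module.End R M) :
    HasPointwiseSum (fun i => if i = k then T i else 0) (T k) where
  vanishesAlong x := (Set.finite_singleton k).eventually_cofinite_notMem.mono fun i hi => by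
    simp only [if_neg (show i ≠ k from hi), LinearMap.zero_apply]
  finsum_apply x := by
    rw [finsum_eq_single _ k fun i hi => by rw [if_neg hi, LinearMap.zero_apply], if_pos rfl]

theorem add (hA : HasPointwiseSum T A) (hB : HasPointwiseSum U B) :
    HasPointwiseSum (fun i => T i + U i) (A + B) where
  vanishesAlong x := by
    filter_upwards [hA.vanishesAlong x, hB.vanishesAlong x] with i hT hU
    rw [LinearMap.add_apply, hT, hU, add_zero]
  finsum_apply x := by
    rw [LinearMap.add_apply, ← hA.finsum_apply, ← hB.finsum_apply]
    exact finsum_add_distrib (hA.vanishesAlong.hasFiniteSupport x)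
      (hB.vanishesAlong.hasFiniteSupport x)

theorem mul_left (hA : HasPointwiseSum T A) (C : Module.End R M) :
    HasPointwiseSum (fun i => C * T i) (C * A) where
  vanishesAlong := hA.vanishesAlong.of_eventually_eq_mul (.of_forall fun _ => ⟨C, rfl⟩)
  finsum_apply x := by
    rw [Module.End.mul_apply, ← hA.finsum_apply]
    exact (map_finsum C (hA.vanishesAlong.hasFiniteSupport x)).symm

theorem mul_right (hA : HasPointwiseSum T A) (C : Module.End R M) :
    HasPointwiseSum (fun i => T i * C) (A * C) where
  vanishesAlong x := hA.vanishesAlong (C x)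
  finsum_apply x := hA.finsum_apply (C x)

theorem const_smul (hA : HasPointwiseSum T A) (c : R) :
    HasPointwiseSum (fun i => c • T i) (c • A) := by
  simpa only [smul_mul_assoc, one_mul] using hA.mul_left (c • 1)

theorem neg (hA : HasPointwiseSum T A) : HasPointwiseSum (fun i => -T i) (-A) := by
  simpa only [neg_smul, one_smul] using hA.const_smul (-1)

theorem sub (hA : HasPointwiseSum T A) (hB : HasPointwiseSum U B) :
    HasPointwiseSum (fun i => T i - U i) (A - B) := by
  simpa only [sub_eq_add_neg] using hA.add hB.neg

theorem lie (hA : HasPointwiseSum T A) (C : Module.End R M) :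
    HasPointwiseSum (fun i => ⁅T i, C⁆) ⁅A, C⁆ :=
  (hA.mul_right C).sub (hA.mul_left C)

theorem comp_equiv (hA : HasPointwiseSum T A) (e : κ ≃ ι) :
    HasPointwiseSum (fun k => T (e k)) A where
  vanishesAlong := hA.vanishesAlong.comp_tendsto e.injective.tendsto_cofinite
  finsum_apply x := (finsum_comp_equiv e (f := fun i => T i x)).trans (hA.finsum_apply x)

theorem comp_injective (hA : HasPointwiseSum T A) {e : κ → ι} (he : Function.Injective e)
    (hT : ∀ i ∉ Set.range e, T i = 0) : HasPointwiseSum (fun k => T (e k)) A where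
  vanishesAlong := hA.vanishesAlong.comp_tendsto he.tendsto_cofinite
  finsum_apply x := by
    rw [← hA.finsum_apply, ← finsum_mem_range he (f := fun i => T i x),
      ← finsum_mem_univ (fun i => T i x)]
    refine finsum_mem_inter_support_eq' _ _ _ fun i hi => iff_of_true ?_ trivial
    by_contra h
    exact hi (LinearMap.congr_fun (hT i h) x)

theorem mem_compatibleMaps {p q : Submodule R M} (hA : HasPointwiseSum T A)
    (hT : ∀ i, T i ∈ p.compatibleMaps q) : A ∈ p.compatibleMaps q := fun x hx => by
  change A x ∈ q
  rw [← hA.finsum_apply]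
  exact finsum_induction (· ∈ q) q.zero_mem (fun _ _ => q.add_mem) fun i => hT i hx

/-- The difference of indicator functions encodes the oriented interval from `p` to `q`, which
counts negatively when `q < p`. -/
theorem telescope (G : ℤ → R) (p q : ℤ) (A : Module.End R M) :
    HasPointwiseSum (fun k : ℤ =>
      ((G (k + 1) - G k) * ((if p ≤ k then 1 else 0) - if q ≤ k then 1 else 0)) • A)
      ((G q - G p) • A) := by
  induction q using Int.inductionOn' (b := p) with
  | zero => simpa only [sub_self, mul_zero, zero_smul] using zero
  | succ q _ ih =>
    convert ih.add (ite_eq q fun k => (G (k + 1) - G k) • A) using 1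
    · funext k
      rcases lt_trichotomy k q with h | rfl | h
      · simp [h.ne, h.not_ge, (h.trans (lt_add_one q)).not_ge]
      · rw [if_pos rfl, ← add_smul, if_pos le_rfl, if_neg (lt_add_one k).not_ge]
        ring_nf
      · simp [h.ne', h.le, Int.add_one_le_iff.2 h]
    · rw [← add_smul]; ring_nf
  | pred q _ ih =>
    convert ih.sub (ite_eq (q - 1) fun k => (G (k + 1) - G k) • A) using 1
    · funext k
      rcases lt_trichotomy k (q - 1) with h | rfl | h
      · simp [h.ne, h.not_ge, (h.trans (sub_one_lt q)).not_ge]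
      · rw [if_pos rfl, ← sub_smul, if_pos le_rfl, if_neg (sub_one_lt q).not_ge]
        ring_nf
      · simp [h.ne', h.le, Int.sub_one_lt_iff.1 h]
    · rw [← sub_smul]; ring_nf

end HasPointwiseSum

end PointwiseSums

section NeutralFermion

variable {K F : Type*} [Field K] [AddCommGroup F] [Module K F]

/-- The fermionic normal ordered product `:a_i a_j:` of the modes of `a`. -/
def fermionNormalOrder (a : ℤ → Module.End K F) (i j : ℤ) : Module.End K F :=
  if 0 ≤ i then a i * a j else -(a j * a i)

/-- The bosonic normal ordered product `:b_j b_k:` of the modes of `b`. -/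
def bosonNormalOrder (b : ℤ → Module.End K F) (j k : ℤ) : Module.End K F :=
  if j ≤ k then b j * b k else b k * b j

/-- The modes of a neutral fermion field on `F`: the canonical anticommutation relations, and the
field condition. A vacuum vector is not part of the data. -/
structure IsNeutralFermion (a : ℤ → Module.End K F) : Prop where
  anticomm (m n : ℤ) : a m * a n + a n * a m = if m + n = -1 then 1 else 0
  vanishesAlong : VanishesAlong a atBot

/-- The vectors killed by all the annihilation modes. -/
def vacuumSpace (a : ℤ → Module.End K F) : Submodule K F :=
  ⨅ m : Set.Iio (0 : ℤ), LinearMap.ker (a m)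

/-- The span of the ranges of the creation modes. -/
def createdSpace (a : ℤ → Module.End K F) : Submodule K F :=
  ⨆ t : ℕ, LinearMap.range (a t)

/-- The alternating sign `(-1) ^ (i + 1)` of the Heisenberg field. -/
def altSign (K : Type*) [Field K] (i : ℤ) : K :=
  (-1) ^ (i + 1)

theorem VanishesAlong.cofinite_bosonNormalOrder {b : ℤ → Module.End K F}
    (hb : VanishesAlong b atTop) (s : ℤ) :
    VanishesAlong (fun k => bosonNormalOrder b k (s - k)) cofinite := by
  refine .cofinite_of_int ((hb.comp_tendsto (tendsto_atTop_add_const_left _ s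
    tendsto_neg_atBot_atTop)).of_eventually_eq_mul ?_) (hb.of_eventually_eq_mul ?_)
  · filter_upwards [eventually_le_atBot (s / 2)] with k hk
    exact ⟨b k, if_pos (by lia)⟩
  · filter_upwards [eventually_gt_atTop (s / 2)] with k hk
    exact ⟨b (s - k), if_neg (by lia)⟩

theorem altSign_of_even {i : ℤ} (h : Even i) : altSign K i = -1 :=
  h.add_one.neg_one_zpow

theorem altSign_of_odd {i : ℤ} (h : Odd i) : altSign K i = 1 :=
  h.add_one.neg_one_zpow

theorem altSign_congr {i j : ℤ} (h : Even i ↔ Even j) : altSign K i = altSign K j := by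
  rcases i.even_or_odd with hi | hi
  · rw [altSign_of_even hi, altSign_of_even (h.1 hi)]
  · rw [altSign_of_odd hi, altSign_of_odd (by grind)]

theorem altSign_eq_neg {i j : ℤ} (h : Even i ↔ Odd j) : altSign K i = -altSign K j := by
  rcases i.even_or_odd with hi | hi
  · rw [altSign_of_even hi, altSign_of_odd (h.1 hi)]
  · rw [altSign_of_odd hi, altSign_of_even (by grind), neg_neg]

theorem altSign_mul_self (i : ℤ) : altSign K i * altSign K i = 1 := by
  rcases i.even_or_odd with hi | hi
  · rw [altSign_of_even hi, neg_mul_neg, one_mul]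
  · rw [altSign_of_odd hi, one_mul]

variable {a : ℤ → Module.End K F}

theorem mem_vacuumSpace {x : F} : x ∈ vacuumSpace a ↔ ∀ m < 0, a m x = 0 := by
  simp [vacuumSpace, Submodule.mem_iInf]

theorem apply_mem_createdSpace {m : ℤ} (hm : 0 ≤ m) (x : F) : a m x ∈ createdSpace a := by
  lift m to ℕ using hm
  exact le_iSup (fun t : ℕ => LinearMap.range (a t)) m ⟨x, rfl⟩

namespace IsNeutralFermion

theorem anticomm_of_eq (ha : IsNeutralFermion a) {m n : ℤ} (h : m + n = -1) :
    a m * a n + a n * a m = 1 :=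
  (ha.anticomm m n).trans (if_pos h)

theorem anticomm_of_ne (ha : IsNeutralFermion a) {m n : ℤ} (h : m + n ≠ -1) :
    a m * a n = -(a n * a m) :=
  eq_neg_of_add_eq_zero_left ((ha.anticomm m n).trans (if_neg h))

theorem commute_mul (ha : IsNeutralFermion a) {i j m : ℤ} (hi : i + m ≠ -1) (hj : j + m ≠ -1) :
    Commute (a i * a j) (a m) := by
  rw [Commute, SemiconjBy, mul_assoc, ha.anticomm_of_ne hj, mul_neg, ← mul_assoc,
    ha.anticomm_of_ne hi, neg_mul, neg_neg, mul_assoc]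

theorem mul_self_eq_zero [NeZero (2 : K)] (ha : IsNeutralFermion a) (m : ℤ) : a m * a m = 0 := by
  have h : (2 : K) • (a m * a m) = 0 := by
    rw [two_smul, ha.anticomm, if_neg (by lia)]
  exact (smul_eq_zero.1 h).resolve_left two_ne_zero

section Uniqueness

variable [NeZero (2 : K)]

/-- If `x = a_k u + v` is a vacuum vector, then `x = a_{-k-1} a_k x = a_{-k-1} a_k v`, and
`a_{-k-1} a_k` commutes with the other creation modes. -/
theorem eq_zero_of_mem_iSup_range (ha : IsNeutralFermion a) {x : F} (hx : x ∈ vacuumSpace a)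
    {s : Finset ℕ} (hs : x ∈ ⨆ t ∈ s, LinearMap.range (a t)) : x = 0 := by
  induction s using Finset.induction with
  | empty => simpa using hs
  | insert k s hk ih =>
    rw [Finset.iSup_insert] at hs
    obtain ⟨_, ⟨u, rfl⟩, v, hv, hxuv⟩ := Submodule.mem_sup.1 hs
    have hxv : x = (a (-k - 1) * a k) v := by
      have hx' : a (-k - 1) (a k x) = x := by
        simpa [mem_vacuumSpace.1 hx (-k - 1) (by lia)] using
          LinearMap.congr_fun (ha.anticomm_of_eq (m := k) (n := -k - 1) (by lia)) x
      have huu : a k (a k u) = 0 := LinearMap.congr_fun (ha.mul_self_eq_zero k) u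
      rw [Module.End.mul_apply]
      nth_rw 1 [← hx', ← hxuv]
      rw [map_add, huu, zero_add]
    have hstable : (⨆ t ∈ s, LinearMap.range (a t)).map (a (-k - 1) * a k) ≤
        ⨆ t ∈ s, LinearMap.range (a t) := by
      simp only [Submodule.map_iSup]
      refine iSup₂_mono fun t ht => ?_
      have htk : t ≠ k := ne_of_mem_of_not_mem ht hk
      rintro _ ⟨_, ⟨w, rfl⟩, rfl⟩
      exact ⟨(a (-k - 1) * a k) w, (LinearMap.congr_fun
        (ha.commute_mul (i := -k - 1) (j := k) (m := t) (by lia) (by lia)) w).symm⟩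
    exact ih (hxv ▸ hstable (Submodule.mem_map_of_mem hv))

theorem disjoint_vacuumSpace_createdSpace (ha : IsNeutralFermion a) :
    Disjoint (vacuumSpace a) (createdSpace a) := by
  refine Submodule.disjoint_def.2 fun x hx hx' => ?_
  obtain ⟨s, hs⟩ := (Submodule.mem_iSup_iff_exists_finset).1 hx'
  exact ha.eq_zero_of_mem_iSup_range hx hs

/-- Since `x = a_{-k-1} a_k x + a_k a_{-k-1} x`, every vector is obtained by applying creation
modes to vectors killed by one more annihilation mode. -/
theorem eq_zero_of_forall_mem_vacuumSpace (ha : IsNeutralFermion a) {X : Module.End K F} {σ : K}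
    (hX : ∀ m, X * a m = σ • (a m * X)) (hvac : ∀ x ∈ vacuumSpace a, X x = 0) : X = 0 := by
  have hfinite (s : Finset ℕ) : ∀ x, (∀ t : ℕ, t ∉ s → a (-t - 1) x = 0) → X x = 0 := by
    induction s using Finset.induction with
    | empty =>
      refine fun x hx => hvac x (mem_vacuumSpace.2 fun m hm => ?_)
      obtain ⟨t, rfl⟩ : ∃ t : ℕ, m = -t - 1 := ⟨(-m - 1).toNat, by lia⟩
      exact hx t (Finset.notMem_empty t)
    | insert k s _ ih =>
      intro x hx
      have hsq (y : F) : a (-k - 1) (a (-k - 1) y) = 0 :=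
        LinearMap.congr_fun (ha.mul_self_eq_zero _) y
      have hu : X (a (-k - 1) (a k x)) = 0 := ih _ fun t ht => by
        rcases eq_or_ne t k with rfl | htk
        · exact hsq _
        · have := LinearMap.congr_fun
            (ha.commute_mul (i := -k - 1) (j := k) (m := -t - 1) (by lia) (by lia)) x
          simpa [hx t (by simp [htk, ht])] using this.symm
      have hv : X (a (-k - 1) x) = 0 := ih _ fun t ht => by
        rcases eq_or_ne t k with rfl | htk
        · exact hsq _
        · have := LinearMap.congr_fun
            (ha.anticomm_of_ne (m := -t - 1) (n := -k - 1) (by lia)) x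
          simpa [hx t (by simp [htk, ht])] using this
      have hav : X (a k (a (-k - 1) x)) = 0 := by
        simpa [hv] using LinearMap.congr_fun (hX k) (a (-k - 1) x)
      have hx' : a k (a (-k - 1) x) + a (-k - 1) (a k x) = x := by
        simpa using LinearMap.congr_fun (ha.anticomm_of_eq (m := k) (n := -k - 1) (by lia)) x
      rw [← hx', map_add, hav, hu, add_zero]
  ext x
  obtain ⟨N, hN⟩ := eventually_atBot.1 (ha.vanishesAlong x)
  refine hfinite (Finset.range N.natAbs) x fun t ht => hN _ ?_
  rw [Finset.mem_range] at ht
  lia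

theorem eq_zero_of_semicommute (ha : IsNeutralFermion a) {X : Module.End K F} {σ : K} (hσ : σ ≠ 0)
    (hX : ∀ m, X * a m = σ • (a m * X))
    (hmem : X ∈ (vacuumSpace a).compatibleMaps (createdSpace a)) : X = 0 := by
  refine ha.eq_zero_of_forall_mem_vacuumSpace hX fun x hx => ?_
  refine Submodule.disjoint_def.1 ha.disjoint_vacuumSpace_createdSpace _ ?_ (hmem hx)
  refine mem_vacuumSpace.2 fun m hm => ?_
  have h : σ • a m (X x) = 0 := by
    simpa [mem_vacuumSpace.1 hx m hm] using (LinearMap.congr_fun (hX m) x).symm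
  exact (smul_eq_zero.1 h).resolve_left hσ

theorem eq_of_lie_eq (ha : IsNeutralFermion a) {X Y : Module.End K F}
    (hX : X ∈ (vacuumSpace a).compatibleMaps (createdSpace a))
    (hY : Y ∈ (vacuumSpace a).compatibleMaps (createdSpace a))
    (h : ∀ m, ⁅X, a m⁆ = ⁅Y, a m⁆) : X = Y := by
  refine sub_eq_zero.1 (ha.eq_zero_of_semicommute one_ne_zero (fun m => ?_) (sub_mem hX hY))
  rw [one_smul, ← sub_eq_zero, ← LieRing.of_associative_ring_bracket, sub_lie, h, sub_self]

end Uniqueness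

section Quadratic

theorem fermionNormalOrder_eq (ha : IsNeutralFermion a) (i j : ℤ) :
    fermionNormalOrder a i j = a i * a j - if i < 0 ∧ i + j = -1 then 1 else 0 := by
  rcases le_or_gt 0 i with hi | hi
  · simp [fermionNormalOrder, hi, hi.not_gt]
  · simp [fermionNormalOrder, hi, hi.not_ge, ← ha.anticomm i j]

theorem fermionNormalOrder_swap (ha : IsNeutralFermion a) (i j : ℤ) :
    fermionNormalOrder a j i = -fermionNormalOrder a i j := by
  simp only [fermionNormalOrder]
  split_ifs with hj hi hi
  · exact ha.anticomm_of_ne (by lia)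
  · rw [neg_neg]
  · rfl
  · rw [neg_neg, ha.anticomm_of_ne (by lia), neg_neg]

theorem fermionNormalOrder_apply_eq_zero (ha : IsNeutralFermion a) {N : ℤ} (hN : N < 0) {x : F}
    (hx : ∀ m ≤ N, a m x = 0) {i j : ℤ} (hij : i ≤ N ∨ j ≤ N) :
    fermionNormalOrder a i j x = 0 := by
  wlog hi : i ≤ N generalizing i j
  · rw [ha.fermionNormalOrder_swap j i, LinearMap.neg_apply,
      this hij.symm (hij.resolve_left hi), neg_zero]
  rw [fermionNormalOrder, if_neg (hi.trans_lt hN).not_ge, LinearMap.neg_apply,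
    Module.End.mul_apply, hx i hi, map_zero, neg_zero]

theorem lie_fermionNormalOrder (ha : IsNeutralFermion a) (i j m : ℤ) :
    ⁅fermionNormalOrder a i j, a m⁆ =
      (if j + m = -1 then a i else 0) - if i + m = -1 then a j else 0 := by
  have h : ⁅fermionNormalOrder a i j, a m⁆ =
      a i * (a j * a m + a m * a j) - (a i * a m + a m * a i) * a j := by
    rw [ha.fermionNormalOrder_eq, LieRing.of_associative_ring_bracket]
    split_ifs <;> noncomm_ring
  rw [h, ha.anticomm, ha.anticomm, mul_ite, mul_one, mul_zero, ite_mul, one_mul, zero_mul]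

theorem vanishesAlong_quadratic (ha : IsNeutralFermion a) (g : ℤ → K) (c : ℤ) :
    VanishesAlong (fun i => g i • fermionNormalOrder a i (c - i)) cofinite := by
  have hreflect : VanishesAlong (fun i => a (c - i)) atTop :=
    ha.vanishesAlong.comp_tendsto (tendsto_atBot_add_const_left _ c tendsto_neg_atTop_atBot)
  refine .cofinite_of_int (ha.vanishesAlong.of_eventually_eq_mul ?_)
    (hreflect.of_eventually_eq_mul ?_)
  · filter_upwards [eventually_lt_atBot 0] with i hi
    refine ⟨-(g i • a (c - i)), ?_⟩
    rw [fermionNormalOrder, if_neg hi.not_ge, smul_neg, neg_mul, smul_mul_assoc]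
  · filter_upwards [eventually_ge_atTop 0] with i hi
    exact ⟨g i • a i, by rw [fermionNormalOrder, if_pos hi, smul_mul_assoc]⟩

/-- The quadratic operator `∑ i, g i • :a_i a_{c-i}:`, of which the Heisenberg modes and the modes
of `L^{1/2}` are instances. -/
def quadratic (ha : IsNeutralFermion a) (g : ℤ → K) (c : ℤ) : Module.End K F :=
  (ha.vanishesAlong_quadratic g c).pointwiseSum

theorem hasPointwiseSum_quadratic (ha : IsNeutralFermion a) (g : ℤ → K) (c : ℤ) :
    HasPointwiseSum (fun i => g i • fermionNormalOrder a i (c - i)) (ha.quadratic g c) :=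
  (ha.vanishesAlong_quadratic g c).hasPointwiseSum

theorem lie_quadratic (ha : IsNeutralFermion a) (g : ℤ → K) (c m : ℤ) :
    ⁅ha.quadratic g c, a m⁆ = (g (m + c + 1) - g (-1 - m)) • a (m + c + 1) := by
  refine ((ha.hasPointwiseSum_quadratic g c).lie (a m)).unique ?_
  convert (HasPointwiseSum.ite_eq (m + c + 1) fun i => g i • a i).sub
    (HasPointwiseSum.ite_eq (-1 - m) fun i => g i • a (c - i)) using 1
  · funext i
    simp only [smul_lie, ha.lie_fermionNormalOrder, smul_sub, smul_ite, smul_zero]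
    congr 2 <;> exact propext (by lia)
  · rw [sub_smul, show c - (-1 - m) = m + c + 1 by ring]

theorem quadratic_reflect (ha : IsNeutralFermion a) (g : ℤ → K) (c : ℤ) :
    ha.quadratic (fun i => g (c - i)) c = -ha.quadratic g c := by
  refine (ha.hasPointwiseSum_quadratic _ c).unique ?_
  convert ((ha.hasPointwiseSum_quadratic g c).comp_equiv (Equiv.subLeft c)).neg using 2 with i
  rw [Equiv.subLeft_apply, sub_sub_cancel, ha.fermionNormalOrder_swap i, smul_neg, neg_neg]

theorem quadratic_eq_zero [NeZero (2 : K)] (ha : IsNeutralFermion a) {g : ℤ → K} {c : ℤ}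
    (hg : ∀ i, g (c - i) = g i) : ha.quadratic g c = 0 := by
  have h : ha.quadratic g c = -ha.quadratic g c := by
    simpa only [hg] using ha.quadratic_reflect g c
  have h2 : (2 : K) • ha.quadratic g c = 0 := by
    rw [two_smul, ← eq_neg_iff_add_eq_zero, ← h]
  exact (smul_eq_zero.1 h2).resolve_left two_ne_zero

theorem vanishesAlong_quadratic_atBot (ha : IsNeutralFermion a) (g : ℤ → K) :
    VanishesAlong (ha.quadratic g) atBot := fun x => by
  obtain ⟨N, hN, hx⟩ : ∃ N < 0, ∀ m ≤ N, a m x = 0 := by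
    obtain ⟨N, hN⟩ := eventually_atBot.1 (ha.vanishesAlong x)
    exact ⟨min N (-1), by lia, fun m hm => hN m (by lia)⟩
  filter_upwards [eventually_le_atBot (2 * N)] with c hc
  rw [← (ha.hasPointwiseSum_quadratic g c).finsum_apply]
  refine finsum_eq_zero_of_forall_eq_zero fun i => ?_
  rw [LinearMap.smul_apply, ha.fermionNormalOrder_apply_eq_zero hN hx (by lia), smul_zero]

theorem quadratic_mem_of_neg (ha : IsNeutralFermion a) (g : ℤ → K) {c : ℤ} (hc : c < 0) :
    ha.quadratic g c ∈ (vacuumSpace a).compatibleMaps ⊥ := by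
  refine (ha.hasPointwiseSum_quadratic g c).mem_compatibleMaps fun i =>
    Submodule.smul_mem _ _ fun x hx => ?_
  have hx' := mem_vacuumSpace.1 hx
  exact ha.fermionNormalOrder_apply_eq_zero (N := -1) (by lia) (fun m hm => hx' m (by lia)) (by lia)

theorem quadratic_mem_of_nonneg (ha : IsNeutralFermion a) (g : ℤ → K) {c : ℤ} (hc : 0 ≤ c) :
    ha.quadratic g c ∈ (⊤ : Submodule K F).compatibleMaps (createdSpace a) := by
  refine (ha.hasPointwiseSum_quadratic g c).mem_compatibleMaps fun i =>
    Submodule.smul_mem _ _ fun x _ => ?_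
  rw [Submodule.mem_comap, fermionNormalOrder]
  split_ifs with hi
  · exact apply_mem_createdSpace hi _
  · exact neg_mem (apply_mem_createdSpace (by lia) _)

theorem quadratic_mem (ha : IsNeutralFermion a) (g : ℤ → K) (c : ℤ) :
    ha.quadratic g c ∈ (vacuumSpace a).compatibleMaps (createdSpace a) := fun x hx => by
  rcases lt_or_ge c 0 with hc | hc
  · exact (bot_le : ⊥ ≤ createdSpace a) (ha.quadratic_mem_of_neg g hc hx)
  · exact ha.quadratic_mem_of_nonneg g hc trivial

end Quadratic

section Current

/-- The modes of the current `:φ(w)φ(-w):`, in which `current (2 * n)` is twice the Heisenberg mode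
`h_n` and the odd modes vanish. Keeping the odd modes makes sums over all modes available. -/
def current (ha : IsNeutralFermion a) (n : ℤ) : Module.End K F :=
  ha.quadratic (altSign K) (-n - 1)

theorem lie_current (ha : IsNeutralFermion a) (n m : ℤ) :
    ⁅ha.current n, a m⁆ = (altSign K (m - n) + altSign K m) • a (m - n) := by
  rw [current, ha.lie_quadratic, altSign_eq_neg (i := -1 - m) (j := m) (by grind), sub_neg_eq_add,
    show m + (-n - 1) + 1 = m - n by ring]

theorem lie_current_of_even (ha : IsNeutralFermion a) {n : ℤ} (hn : Even n) (m : ℤ) :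
    ⁅ha.current n, a m⁆ = (2 * altSign K m) • a (m - n) := by
  rw [ha.lie_current, altSign_congr (i := m - n) (j := m) (by grind), two_mul]

theorem current_of_odd [NeZero (2 : K)] (ha : IsNeutralFermion a) {n : ℤ} (hn : Odd n) :
    ha.current n = 0 :=
  ha.quadratic_eq_zero fun _ => altSign_congr (by grind)

theorem vanishesAlong_current (ha : IsNeutralFermion a) : VanishesAlong ha.current atTop :=
  (ha.vanishesAlong_quadratic_atBot _).comp_tendsto <|
    tendsto_atBot_add_const_right _ (-1) tendsto_neg_atTop_atBot

theorem current_apply_eq_zero (ha : IsNeutralFermion a) {n : ℤ} (hn : 0 ≤ n) {x : F}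
    (hx : x ∈ vacuumSpace a) : ha.current n x = 0 :=
  ha.quadratic_mem_of_neg _ (by lia) hx

theorem current_apply_mem_createdSpace (ha : IsNeutralFermion a) {n : ℤ} (hn : n < 0) (x : F) :
    ha.current n x ∈ createdSpace a :=
  ha.quadratic_mem_of_nonneg _ (by lia) trivial

theorem bosonNormalOrder_current_mem (ha : IsNeutralFermion a) (j k : ℤ) :
    bosonNormalOrder ha.current j k ∈ (vacuumSpace a).compatibleMaps (createdSpace a) := by
  have hmul {j k : ℤ} (hjk : j ≤ k) :
      ha.current j * ha.current k ∈ (vacuumSpace a).compatibleMaps (createdSpace a) := by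
    intro x hx
    rw [Submodule.mem_comap, Module.End.mul_apply]
    rcases le_or_gt 0 k with hk | hk
    · rw [ha.current_apply_eq_zero hk hx, map_zero]
      exact zero_mem _
    · exact ha.current_apply_mem_createdSpace (hjk.trans_lt hk) _
  rw [bosonNormalOrder]
  split_ifs with h
  · exact hmul h
  · exact hmul (le_of_not_ge h)

end Current

section Mixed

/-- The normal ordered product `:J_k a_m:` of a current mode and a fermion mode, in which creation
fermion modes are moved to the left. -/
def mixedNormalOrder (ha : IsNeutralFermion a) (k m : ℤ) : Module.End K F :=
  if 0 ≤ m then a m * ha.current k else ha.current k * a m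

theorem current_mul (ha : IsNeutralFermion a) (k m : ℤ) :
    ha.current k * a m =
      ha.mixedNormalOrder k m + if 0 ≤ m then ⁅ha.current k, a m⁆ else 0 := by
  rw [mixedNormalOrder, LieRing.of_associative_ring_bracket]
  split_ifs <;> abel

theorem mul_current (ha : IsNeutralFermion a) (k m : ℤ) :
    a m * ha.current k =
      ha.mixedNormalOrder k m - if 0 ≤ m then 0 else ⁅ha.current k, a m⁆ := by
  rw [mixedNormalOrder, LieRing.of_associative_ring_bracket]
  split_ifs <;> abel

theorem mixedNormalOrder_mem (ha : IsNeutralFermion a) (k m : ℤ) :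
    ha.mixedNormalOrder k m ∈ (vacuumSpace a).compatibleMaps (createdSpace a) := fun x hx => by
  rw [Submodule.mem_comap, mixedNormalOrder]
  split_ifs with hm
  · exact apply_mem_createdSpace hm _
  · rw [Module.End.mul_apply, mem_vacuumSpace.1 hx m (not_le.1 hm), map_zero]
    exact zero_mem _

theorem mixedNormalOrder_anticomm (ha : IsNeutralFermion a) (k m r : ℤ) :
    ha.mixedNormalOrder k m * a r + a r * ha.mixedNormalOrder k m =
      (if m + r = -1 then ha.current k else 0) +
        (altSign K (r - k) + altSign K r) • fermionNormalOrder a m (r - k) := by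
  have hlie := ha.lie_current k r
  have hcar : (a m * a r + a r * a m) * ha.current k =
      ha.current k * (a m * a r + a r * a m) := by
    rw [ha.anticomm]
    split_ifs <;> simp
  have hite : (if m + r = -1 then ha.current k else 0) =
      ha.current k * (a m * a r + a r * a m) := by
    rw [ha.anticomm, mul_ite, mul_one, mul_zero]
  rw [hite, mixedNormalOrder, fermionNormalOrder]
  split_ifs with hm
  · rw [← mul_smul_comm, ← hlie, ← hcar, LieRing.of_associative_ring_bracket]
    noncomm_ring
  · rw [smul_neg, ← smul_mul_assoc, ← hlie, LieRing.of_associative_ring_bracket]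
    noncomm_ring

theorem vanishesAlong_mixedNormalOrder (ha : IsNeutralFermion a) (q : ℤ) :
    VanishesAlong (fun k => ha.mixedNormalOrder k (q + k)) cofinite := by
  refine .cofinite_of_int ((ha.vanishesAlong.comp_tendsto
    (tendsto_atBot_add_const_left _ q tendsto_id)).of_eventually_eq_mul ?_)
    (ha.vanishesAlong_current.of_eventually_eq_mul ?_)
  · filter_upwards [eventually_lt_atBot (-q)] with k hk
    exact ⟨ha.current k, if_neg (by lia)⟩
  · filter_upwards [eventually_ge_atTop (-q)] with k hk
    exact ⟨a (q + k), if_pos (by lia)⟩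

/-- In terms of fields, `:J(w)φ(w):` vanishes because `φ` squares to zero. -/
theorem hasPointwiseSum_mixedNormalOrder [NeZero (2 : K)] (ha : IsNeutralFermion a) (q : ℤ) :
    HasPointwiseSum (fun k => ha.mixedNormalOrder k (q + k)) 0 := by
  have hsum := (ha.vanishesAlong_mixedNormalOrder q).hasPointwiseSum
  suffices h : (ha.vanishesAlong_mixedNormalOrder q).pointwiseSum = 0 from h ▸ hsum
  refine ha.eq_zero_of_semicommute (neg_ne_zero.2 one_ne_zero) (fun r => ?_)
    (hsum.mem_compatibleMaps fun k => ha.mixedNormalOrder_mem k (q + k))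
  rw [neg_one_smul, ← add_eq_zero_iff_eq_neg]
  have hshift (g : ℤ → K) : HasPointwiseSum
      (fun k => g (q + k) • fermionNormalOrder a (q + k) (r - k)) (ha.quadratic g (q + r)) := by
    simpa only [Equiv.coe_addLeft, add_sub_add_left_eq_sub] using
      (ha.hasPointwiseSum_quadratic g (q + r)).comp_equiv (Equiv.addLeft q)
  have hreflect : HasPointwiseSum
      (fun k => altSign K (r - k) • fermionNormalOrder a (q + k) (r - k))
      (-ha.quadratic (altSign K) (q + r)) := by
    simpa only [ha.quadratic_reflect, add_sub_add_left_eq_sub] using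
      hshift fun i => altSign K (q + r - i)
  have hconst : HasPointwiseSum
      (fun k => altSign K r • fermionNormalOrder a (q + k) (r - k)) 0 :=
    ha.quadratic_eq_zero (g := fun _ => altSign K r) (fun _ => rfl) ▸ hshift fun _ => altSign K r
  refine ((hsum.mul_right (a r)).add (hsum.mul_left (a r))).unique ?_
  convert (HasPointwiseSum.ite_eq (-1 - q - r) ha.current).add (hreflect.add hconst) using 1
  · funext k
    rw [ha.mixedNormalOrder_anticomm, add_smul]
    congr 2
    exact propext (by lia)
  · rw [current, add_zero, show -(-1 - q - r) - 1 = q + r by ring, add_neg_cancel]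

end Mixed

section Sugawara

theorem lie_current_mul_current [NeZero (2 : K)] (ha : IsNeutralFermion a) {j k : ℤ}
    (hjk : Even (j + k)) (m : ℤ) :
    ⁅ha.current j * ha.current k, a m⁆ =
      (2 * altSign K m) • (ha.mixedNormalOrder j (m - k) + ha.mixedNormalOrder k (m - j)) +
        (2 * (1 - altSign K k) * ((if j ≤ m then 1 else 0) + (if k ≤ m then 1 else 0) - 1)) •
          a (m - (j + k)) := by
  rcases k.even_or_odd with hk | hk
  · have hj : Even j := by grind
    have hsq : (2 * altSign K m) * (2 * altSign K m) = 4 := by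
      linear_combination 4 * altSign_mul_self (K := K) m
    have hderiv : ⁅ha.current j * ha.current k, a m⁆ =
        ha.current j * ⁅ha.current k, a m⁆ + ⁅ha.current j, a m⁆ * ha.current k := by
      simp only [LieRing.of_associative_ring_bracket]; noncomm_ring
    rw [hderiv, ha.lie_current_of_even hk, ha.lie_current_of_even hj, mul_smul_comm,
      smul_mul_assoc, ha.current_mul, ha.mul_current, ha.lie_current_of_even hj,
      ha.lie_current_of_even hk, altSign_of_even hk,
      altSign_congr (i := m - k) (j := m) (by grind),
      altSign_congr (i := m - j) (j := m) (by grind), sub_sub, sub_sub, add_comm k j]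
    simp only [sub_nonneg]
    split_ifs
    · linear_combination (norm := module) hsq • a (m - (j + k))
    · module
    · module
    · linear_combination (norm := module) -hsq • a (m - (j + k))
  · have hj : Odd j := by grind
    simp [mixedNormalOrder, ha.current_of_odd hj, ha.current_of_odd hk, altSign_of_odd hk]

theorem lie_bosonNormalOrder_current [NeZero (2 : K)] (ha : IsNeutralFermion a) {j k : ℤ}
    (hjk : Even (j + k)) (m : ℤ) :
    ⁅bosonNormalOrder ha.current j k, a m⁆ =
      (2 * altSign K m) • (ha.mixedNormalOrder j (m - k) + ha.mixedNormalOrder k (m - j)) +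
        (2 * (1 - altSign K j) * ((if j ≤ m then 1 else 0) + (if k ≤ m then 1 else 0) - 1)) •
          a (m - (j + k)) := by
  by_cases h : j ≤ k
  · rw [bosonNormalOrder, if_pos h, ha.lie_current_mul_current hjk,
      altSign_congr (i := j) (j := k) (by grind)]
  · rw [bosonNormalOrder, if_neg h, ha.lie_current_mul_current (add_comm j k ▸ hjk),
      add_comm k j, add_comm (ha.mixedNormalOrder k _), add_comm (if k ≤ m then (1 : K) else 0)]

theorem lie_sum_bosonNormalOrder_current [NeZero (2 : K)] (ha : IsNeutralFermion a) {s : ℤ}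
    (hs : Even s) {A : Module.End K F}
    (hA : HasPointwiseSum (fun k => bosonNormalOrder ha.current k (s - k)) A) (m : ℤ) :
    ⁅A, a m⁆ = (2 * (2 * m + 1 - s - altSign K m)) • a (m - s) := by
  refine (hA.lie (a m)).unique ?_
  have hprimitive (k : ℤ) :
      (((k + 1 : ℤ) : K) + altSign K (k + 1) / 2) - (k + altSign K k / 2) = 1 - altSign K k := by
    rw [altSign_eq_neg (i := k + 1) (j := k) (by grind)]
    push_cast
    field_simp
    ring
  have hmixed := ha.hasPointwiseSum_mixedNormalOrder (m - s)
  convert ((hmixed.add (hmixed.comp_equiv (Equiv.subLeft s))).const_smul (2 * altSign K m)).add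
    ((HasPointwiseSum.telescope (fun k => (k : K) + altSign K k / 2) (s - m) (m + 1)
      (a (m - s))).const_smul 2) using 1
  · funext k
    have hle : s - k ≤ m ↔ s - m ≤ k := by lia
    have hlt : m + 1 ≤ k ↔ ¬ k ≤ m := by lia
    rw [ha.lie_bosonNormalOrder_current (by rwa [add_sub_cancel]), hprimitive,
      Equiv.subLeft_apply, add_sub_cancel, show m - (s - k) = m - s + k by ring,
      show m - s + (s - k) = m - k by ring, smul_smul]
    simp only [hle, hlt]
    split_ifs <;> module
  · rw [add_zero, smul_zero, zero_add, smul_smul,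
      altSign_eq_neg (i := m + 1) (j := m) (by grind),
      altSign_congr (i := s - m) (j := m) (by grind)]
    congr 1
    push_cast
    field_simp
    ring

end Sugawara

section HalfModes

/-- The Heisenberg mode `h_n = (1/2) ∑ i, (-1)^(i+1) :a_i a_{-2n-1-i}:`. -/
def heisenberg (ha : IsNeutralFermion a) (n : ℤ) : Module.End K F :=
  (1 / 2 : K) • ha.current (2 * n)

/-- The Virasoro mode `L^{1/2}_m = (1/2) ∑ i, i :a_i a_{-m-1-i}:`. -/
def virasoroHalf (ha : IsNeutralFermion a) (m : ℤ) : Module.End K F :=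
  (1 / 2 : K) • ha.quadratic (fun i => (i : K)) (-m - 1)

theorem vanishesAlong_heisenberg (ha : IsNeutralFermion a) : VanishesAlong ha.heisenberg atTop :=
  (ha.vanishesAlong_current.comp_tendsto (tendsto_id.const_mul_atTop' two_pos)).of_eventually_eq_mul
    (.of_forall fun _ => ⟨(1 / 2 : K) • 1, (smul_one_mul _ _).symm⟩)

/-- The Virasoro mode `L¹_n = (1/2) ∑ j, :h_j h_{n-j}:`. -/
def virasoroOne (ha : IsNeutralFermion a) (n : ℤ) : Module.End K F :=
  (1 / 2 : K) • (ha.vanishesAlong_heisenberg.cofinite_bosonNormalOrder n).pointwiseSum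

theorem bosonNormalOrder_heisenberg (ha : IsNeutralFermion a) (j k : ℤ) :
    bosonNormalOrder ha.heisenberg j k =
      (1 / 4 : K) • bosonNormalOrder ha.current (2 * j) (2 * k) := by
  have h4 : (1 / 2 : K) * (1 / 2) = 1 / 4 := by rw [one_div_mul_one_div]; norm_num
  simp only [bosonNormalOrder, heisenberg, smul_mul_smul_comm, h4, smul_ite,
    mul_le_mul_iff_right₀ (two_pos (α := ℤ))]

theorem heisenberg_mem (ha : IsNeutralFermion a) (n : ℤ) :
    ha.heisenberg n ∈ (vacuumSpace a).compatibleMaps (createdSpace a) :=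
  Submodule.smul_mem _ _ (ha.quadratic_mem _ _)

theorem virasoroHalf_mem (ha : IsNeutralFermion a) (m : ℤ) :
    ha.virasoroHalf m ∈ (vacuumSpace a).compatibleMaps (createdSpace a) :=
  Submodule.smul_mem _ _ (ha.quadratic_mem _ _)

theorem lie_virasoroHalf (ha : IsNeutralFermion a) (k m : ℤ) :
    ⁅ha.virasoroHalf k, a m⁆ = ((2 * m - k + 1) / 2 : K) • a (m - k) := by
  rw [virasoroHalf, smul_lie, ha.lie_quadratic, smul_smul, show m + (-k - 1) + 1 = m - k by ring]
  congr 1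
  push_cast
  ring

variable [NeZero (2 : K)]

theorem virasoroOne_eq (ha : IsNeutralFermion a) (n : ℤ) :
    ha.virasoroOne n =
      (1 / 8 : K) • (ha.vanishesAlong_current.cofinite_bosonNormalOrder (2 * n)).pointwiseSum := by
  have h8 : (1 / 2 : K) * (1 / 4) = 1 / 8 := by rw [one_div_mul_one_div]; norm_num
  have hsum := (ha.vanishesAlong_current.cofinite_bosonNormalOrder (2 * n)).hasPointwiseSum
  have heven := hsum.comp_injective (mul_right_injective₀ two_ne_zero) fun k hk => by
      have hodd : Odd k := by
        rw [← Int.not_even_iff_odd, even_iff_two_dvd]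
        exact fun ⟨j, hj⟩ => hk ⟨j, hj.symm⟩
      simp [bosonNormalOrder, ha.current_of_odd hodd]
  rw [virasoroOne, ← h8, mul_smul]
  congr 1
  refine (ha.vanishesAlong_heisenberg.cofinite_bosonNormalOrder n).hasPointwiseSum.unique ?_
  convert heven.const_smul (1 / 4 : K) using 2 with j
  rw [ha.bosonNormalOrder_heisenberg, mul_sub]

theorem virasoroOne_mem (ha : IsNeutralFermion a) (n : ℤ) :
    ha.virasoroOne n ∈ (vacuumSpace a).compatibleMaps (createdSpace a) := by
  rw [ha.virasoroOne_eq]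
  exact Submodule.smul_mem _ _ ((VanishesAlong.hasPointwiseSum _).mem_compatibleMaps fun _ =>
    ha.bosonNormalOrder_current_mem _ _)

theorem lie_heisenberg (ha : IsNeutralFermion a) (n m : ℤ) :
    ⁅ha.heisenberg n, a m⁆ = altSign K m • a (m - 2 * n) := by
  rw [heisenberg, smul_lie, ha.lie_current_of_even (even_two_mul n), smul_smul, one_div,
    inv_mul_cancel_left₀ two_ne_zero]

theorem lie_virasoroOne (ha : IsNeutralFermion a) (n m : ℤ) :
    ⁅ha.virasoroOne n, a m⁆ =
      ((2 * m - 2 * n + 1 - altSign K m) / 4 : K) • a (m - 2 * n) := by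
  have h2 : (2 : K) ≠ 0 := two_ne_zero
  have h4 : (4 : K) = 2 * 2 := by norm_num
  have h8 : (8 : K) = 2 * 2 * 2 := by norm_num
  rw [ha.virasoroOne_eq, smul_lie, ha.lie_sum_bosonNormalOrder_current (even_two_mul n)
    (VanishesAlong.hasPointwiseSum _), smul_smul, h4, h8]
  congr 1
  push_cast
  field_simp
  ring

end HalfModes

end IsNeutralFermion

theorem half_modes_identity_general [NeZero (2 : K)] (ha : IsNeutralFermion a) (n : ℤ) :
    (1 / 2 : K) • ha.virasoroHalf (2 * n) = ha.virasoroOne n + (1 / 4 : K) • ha.heisenberg n := by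
  refine ha.eq_of_lie_eq (Submodule.smul_mem _ _ (ha.virasoroHalf_mem _))
    (add_mem (ha.virasoroOne_mem n) (Submodule.smul_mem _ _ (ha.heisenberg_mem n))) fun m => ?_
  have h2 : (2 : K) ≠ 0 := two_ne_zero
  have h4 : (4 : K) = 2 * 2 := by norm_num
  rw [add_lie, smul_lie, smul_lie, ha.lie_virasoroHalf, ha.lie_virasoroOne, ha.lie_heisenberg,
    smul_smul, smul_smul, ← add_smul, h4]
  congr 1
  push_cast
  field_simp
  ring

end NeutralFermion

section FockSpace

/-- The basis index `t` toggled by the mode `a_m`: `m = t` if `a_m` creates and `m = -t - 1` if it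
annihilates. -/
def modeIndex (m : ℤ) : ℕ :=
  if 0 ≤ m then m.toNat else (-m - 1).toNat

/-- The sign picked up by a fermion mode of index `t` on its way to its place in `e_S`. -/
def fermionSign (t : ℕ) (S : Finset ℕ) : ℂ :=
  (-1) ^ (S.filter (t < ·)).card

theorem fermionSign_mul_self (t : ℕ) (S : Finset ℕ) : fermionSign t S * fermionSign t S = 1 := by
  rw [fermionSign, ← mul_pow, neg_one_mul, neg_neg, one_pow]

theorem fermionSign_insert {t u : ℕ} {S : Finset ℕ} (hu : u ∉ S) :
    fermionSign t (insert u S) = (if t < u then -1 else 1) * fermionSign t S := by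
  rw [fermionSign, fermionSign, Finset.filter_insert]
  split_ifs
  · rw [Finset.card_insert_of_notMem (fun h => hu (Finset.mem_of_mem_filter u h)), pow_succ']
  · rw [one_mul]

theorem symmDiff_singleton_of_mem {t : ℕ} {S : Finset ℕ} (h : t ∈ S) : S ∆ {t} = S.erase t := by
  grind [Finset.mem_symmDiff]

theorem symmDiff_singleton_of_notMem {t : ℕ} {S : Finset ℕ} (h : t ∉ S) : S ∆ {t} = insert t S := by
  grind [Finset.mem_symmDiff]

theorem fermionSign_symmDiff (t u : ℕ) (S : Finset ℕ) :
    fermionSign t (S ∆ {u}) = (if t < u then -1 else 1) * fermionSign t S := by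
  by_cases hu : u ∈ S
  · rw [symmDiff_singleton_of_mem hu]
    nth_rw 2 [← Finset.insert_erase hu]
    rw [fermionSign_insert (Finset.notMem_erase u S), ← mul_assoc]
    split_ifs <;> ring
  · rw [symmDiff_singleton_of_notMem hu, fermionSign_insert hu]

theorem aOp_eD (m : ℤ) (S : Finset ℕ) :
    aOp m (eD S) = if 0 ≤ m ↔ modeIndex m ∉ S then
      fermionSign (modeIndex m) S • eD (S ∆ {modeIndex m}) else 0 := by
  have h : aOp m (eD S) = aVec m S := by simp [aOp, eD]
  rw [h, aVec, modeIndex]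
  split_ifs <;>
    grind [fermionSign, symmDiff_singleton_of_mem, symmDiff_singleton_of_notMem]

theorem aOp_aOp_eD (m n : ℤ) (S : Finset ℕ) :
    aOp m (aOp n (eD S)) =
      if (0 ≤ n ↔ modeIndex n ∉ S) ∧ (0 ≤ m ↔ modeIndex m ∉ S ∆ {modeIndex n}) then
        ((if modeIndex m < modeIndex n then -1 else 1) *
          (fermionSign (modeIndex m) S * fermionSign (modeIndex n) S)) •
          eD (S ∆ {modeIndex n} ∆ {modeIndex m}) else 0 := by
  rw [aOp_eD, ite_and, apply_ite (aOp m), map_smul, map_zero, aOp_eD, smul_ite, smul_zero,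
    fermionSign_symmDiff, smul_smul]
  congr 3
  ring

theorem aOp_anticomm_eD (m n : ℤ) (S : Finset ℕ) :
    aOp m (aOp n (eD S)) + aOp n (aOp m (eD S)) = if m + n = -1 then eD S else 0 := by
  have hmem (t u : ℕ) : t ∈ S ∆ {u} ↔ (t ∈ S ↔ t ≠ u) := by grind [Finset.mem_symmDiff]
  rw [aOp_aOp_eD, aOp_aOp_eD]
  rcases eq_or_ne (modeIndex m) (modeIndex n) with h | h
  · have hmn : m + n = -1 ↔ (0 ≤ m ↔ ¬ 0 ≤ n) := by grind [modeIndex]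
    simp only [h, hmem, lt_irrefl, if_false, one_mul, fermionSign_mul_self, one_smul,
      symmDiff_symmDiff_cancel_right, hmn]
    by_cases hm : 0 ≤ m <;> by_cases hn : 0 ≤ n <;> by_cases hS : modeIndex n ∈ S <;>
      simp [hm, hn, hS]
  · have hmn : m + n ≠ -1 := by grind [modeIndex]
    rw [symmDiff_right_comm S {modeIndex m}, if_neg hmn, mul_comm (fermionSign (modeIndex n) S)]
    simp only [hmem, h, h.symm, ne_eq, not_false_eq_true, iff_true,
      and_comm (a := 0 ≤ m ↔ modeIndex m ∉ S)]
    rcases h.lt_or_gt with h' | h' <;> simp only [if_pos h', if_neg h'.not_gt] <;>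
      split_ifs <;> simp

theorem eventually_aOp_eD_eq_zero (S : Finset ℕ) : ∀ᶠ m in atBot, aOp m (eD S) = 0 := by
  have hlt : ∀ᶠ m : ℤ in atBot, ∀ s ∈ S, m < -s - 1 :=
    (Finset.eventually_all S).2 fun s _ => eventually_lt_atBot _
  filter_upwards [eventually_lt_atBot 0, hlt] with m hm hS
  rw [aOp_eD, if_neg]
  rw [modeIndex, if_neg hm.not_ge, iff_false_left hm.not_ge, not_not]
  intro h
  have := hS _ h
  lia

theorem isNeutralFermion_aOp : IsNeutralFermion aOp where
  anticomm m n := by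
    refine Finsupp.lhom_ext' fun S => LinearMap.ext_ring ?_
    change aOp m (aOp n (eD S)) + aOp n (aOp m (eD S)) =
      (if m + n = -1 then 1 else 0 : Module.End ℂ FockD) (eD S)
    rw [aOp_anticomm_eD]
    split_ifs <;> rfl
  vanishesAlong x := by
    induction x using Finsupp.induction_linear with
    | zero => exact .of_forall fun m => map_zero _
    | add x y hx hy =>
      filter_upwards [hx, hy] with m hmx hmy
      rw [map_add, hmx, hmy, add_zero]
    | single S c =>
      filter_upwards [eventually_aOp_eD_eq_zero S] with m hm
      rw [← mul_one c, ← smul_eq_mul, ← Finsupp.smul_single, map_smul, ← eD, hm, smul_zero]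

theorem hD_eq (n : ℤ) (x : FockD) : hD n x = isNeutralFermion_aOp.heisenberg n x := by
  rw [IsNeutralFermion.heisenberg, LinearMap.smul_apply, IsNeutralFermion.current,
    ← (isNeutralFermion_aOp.hasPointwiseSum_quadratic _ _).finsum_apply, hD, neg_mul]
  rfl

theorem LhalfD_eq (m : ℤ) (x : FockD) : LhalfD m x = isNeutralFermion_aOp.virasoroHalf m x := by
  rw [IsNeutralFermion.virasoroHalf, LinearMap.smul_apply,
    ← (isNeutralFermion_aOp.hasPointwiseSum_quadratic _ _).finsum_apply, LhalfD]
  simp only [sub_right_comm (-m)]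
  rfl

theorem L1D_eq (n : ℤ) (x : FockD) : L1D n x = isNeutralFermion_aOp.virasoroOne n x := by
  rw [IsNeutralFermion.virasoroOne, LinearMap.smul_apply,
    ← (VanishesAlong.hasPointwiseSum _).finsum_apply, L1D]
  simp only [hD_eq, bosonNormalOrder, apply_ite (fun T : Module.End ℂ FockD => T x)]
  rfl

end FockSpace

/-- Operator identity `(1/2) L^{1/2}_{2n} = L¹_n + (1/4) h_n` on `F`: the Virasoro field
built from half the modes of `L^{1/2}` is the member `L^{1/2,−1/4}` of the two-parameter
family. -/
theorem half_modes_identity (n : ℤ) (x : FockD) :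
    (1 / 2 : ℂ) • LhalfD (2 * n) x = L1D n x + (1 / 4 : ℂ) • hD n x := by
  rw [LhalfD_eq, L1D_eq, hD_eq]
  exact LinearMap.congr_fun (half_modes_identity_general isNeutralFermion_aOp n) x
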